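/- Let p > 3 and h ∈ (1, p−1). For every c > 0 there exists L₀ ≥ 1 such that for all L ≥ L₀ and all m ≥ 1: ∫_{m−1}^{m} ∫_{−β}^{β} (L + β − α)^{1−p} ⟨α⟩^{−h} (m−β)^{−1/2} dα dβ ≤ c ⟨m⟩^{−h}. -/

import Mathlib

open MeasureTheory intervalIntegral

/-- The Japanese bracket `⟨x⟩ = (1 + x²)^{1/2}`. -/
noncomputable def jap (x : ℝ) : ℝ := Real.sqrt (1 + x ^ 2)

lemma jap_pos (x : ℝ) : 0 < jap x := Real.sqrt_pos.2 (by positivity)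

lemma abs_le_jap (x : ℝ) : |x| ≤ jap x := Real.abs_le_sqrt (by linarith)

lemma jap_le_one_add_abs (x : ℝ) : jap x ≤ 1 + |x| := by
  refine Real.sqrt_le_iff.2 ⟨by positivity, ?_⟩
  nlinarith [sq_abs x, abs_nonneg x]

lemma integrable_jap_rpow_neg {s : ℝ} (hs : 1 < s) : Integrable fun x : ℝ => jap x ^ (-s) := by
  have hint := integrable_rpow_neg_one_add_norm_sq (E := ℝ) (μ := volume) (r := s) (by simpa using hs)
  refine hint.congr (Filter.Eventually.of_forall fun x => ?_)
  simp only [jap, Real.norm_eq_abs, sq_abs]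
  rw [Real.sqrt_eq_rpow, ← Real.rpow_mul (by positivity)]
  congr 1
  ring

/-- The weight `⟨m⟩^{-h}` can be extracted from `x^{1-p} ⟨α⟩^{-h}` whenever `⟨m⟩ ≲ x + ⟨α⟩`. -/
lemma rpow_mul_rpow_le_of_le_add {h p x y z : ℝ} (hh : 0 ≤ h) (hx : 0 < x) (hy : 0 < y)
    (hz : 0 < z) (hle : z ≤ 2 * (x + y)) :
    x ^ (1 - p) * y ^ (-h) ≤
      4 ^ h * z ^ (-h) * (x ^ (h + 1 - p) * y ^ (-h) + x ^ (1 - p)) := by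
  have hpow : z ^ h ≤ 4 ^ h * (x ^ h + y ^ h) := by
    have hmax : z ≤ 4 * max x y := by linarith [le_max_left x y, le_max_right x y]
    calc z ^ h ≤ (4 * max x y) ^ h := by gcongr
      _ = 4 ^ h * (max x y) ^ h := Real.mul_rpow (by norm_num) (le_max_of_le_left hx.le)
      _ ≤ 4 ^ h * (x ^ h + y ^ h) := by
        gcongr
        have := Real.rpow_pos_of_pos hx h
        have := Real.rpow_pos_of_pos hy h
        rcases max_choice x y with e | e <;> rw [e] <;> linarith
  have hsplit : x ^ (h + 1 - p) = x ^ h * x ^ (1 - p) := by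
    rw [← Real.rpow_add hx]
    congr 1
    ring
  have hzz : z ^ (-h) * z ^ h = 1 := by rw [← Real.rpow_add hz]; simp
  have hyy : y ^ (-h) * y ^ h = 1 := by rw [← Real.rpow_add hy]; simp
  calc x ^ (1 - p) * y ^ (-h) = x ^ (1 - p) * y ^ (-h) * (z ^ (-h) * z ^ h) := by rw [hzz, mul_one]
    _ ≤ x ^ (1 - p) * y ^ (-h) * (z ^ (-h) * (4 ^ h * (x ^ h + y ^ h))) := by gcongr
    _ = 4 ^ h * z ^ (-h) * (x ^ h * x ^ (1 - p) * y ^ (-h) + x ^ (1 - p) * (y ^ (-h) * y ^ h)) := by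
      ring
    _ = _ := by rw [hyy, hsplit, mul_one]

lemma kernel_le {p h L m α β : ℝ} (hp : 3 < p) (hh1 : 1 < h) (hh2 : h < p - 1) (hL : 1 ≤ L)
    (hm : 1 ≤ m) (hβ : m - 1 ≤ β) (hα : α ≤ β) :
    (L + β - α) ^ (1 - p) * jap α ^ (-h) ≤ 4 ^ h * jap m ^ (-h) *
      (L ^ (h + 1 - p) * jap α ^ (-h) + L ^ (3 - p) * jap (β - α) ^ (-2 : ℝ)) := by
  have hx : L ≤ L + β - α := by linarith
  have hx0 : 0 < L + β - α := by linarith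
  have hle : jap m ≤ 2 * (L + β - α + jap α) := by
    have := jap_le_one_add_abs m
    rw [abs_of_nonneg (by linarith)] at this
    linarith [abs_le_jap α, le_abs_self α]
  have hjα := Real.rpow_pos_of_pos (jap_pos α) (-h)
  have hjm := Real.rpow_pos_of_pos (jap_pos m) (-h)
  refine (rpow_mul_rpow_le_of_le_add (by linarith) hx0 (jap_pos α) (jap_pos m) hle).trans ?_
  refine mul_le_mul_of_nonneg_left (add_le_add (mul_le_mul_of_nonneg_right
    (Real.rpow_le_rpow_of_nonpos (by linarith) hx (by linarith)) hjα.le) ?_) (by positivity)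
  have hsplit : (L + β - α) ^ (1 - p) = (L + β - α) ^ (3 - p) * (L + β - α) ^ (-2 : ℝ) := by
    rw [← Real.rpow_add hx0]
    congr 1
    ring
  have hj : jap (β - α) ≤ L + β - α := by
    have := jap_le_one_add_abs (β - α)
    rw [abs_of_nonneg (by linarith)] at this
    linarith
  rw [hsplit]
  exact mul_le_mul (Real.rpow_le_rpow_of_nonpos (by linarith) hx (by linarith))
    (Real.rpow_le_rpow_of_nonpos (jap_pos _) hj (by norm_num))
    (by positivity) (by positivity)

lemma norm_inner_integral_le {p h L m β : ℝ} (hp : 3 < p) (hh1 : 1 < h) (hh2 : h < p - 1)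
    (hL : 1 ≤ L) (hm : 1 ≤ m) (hβ : m - 1 ≤ β) (hβm : β ≤ m) :
    ‖∫ α in (-β)..β, (L + β - α) ^ (1 - p) * jap α ^ (-h) * (m - β) ^ (-(1 / 2) : ℝ)‖ ≤
      4 ^ h * jap m ^ (-h) * (L ^ (h + 1 - p) * (∫ α, jap α ^ (-h)) +
        L ^ (3 - p) * ∫ α, jap α ^ (-2 : ℝ)) * (m - β) ^ (-(1 / 2) : ℝ) := by
  have hs : 0 ≤ (m - β) ^ (-(1 / 2) : ℝ) := Real.rpow_nonneg (by linarith) _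
  have hjm := Real.rpow_pos_of_pos (jap_pos m) (-h)
  have hnn (s x : ℝ) : 0 ≤ jap x ^ s := (Real.rpow_pos_of_pos (jap_pos x) s).le
  have hi₁ : Integrable fun α : ℝ => L ^ (h + 1 - p) * jap α ^ (-h) :=
    (integrable_jap_rpow_neg hh1).const_mul _
  have hi₂ : Integrable fun α : ℝ => L ^ (3 - p) * jap (β - α) ^ (-2 : ℝ) :=
    ((integrable_jap_rpow_neg one_lt_two).comp_sub_left β).const_mul _
  set g : ℝ → ℝ := fun α => 4 ^ h * jap m ^ (-h) *
    (L ^ (h + 1 - p) * jap α ^ (-h) + L ^ (3 - p) * jap (β - α) ^ (-2 : ℝ)) *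
      (m - β) ^ (-(1 / 2) : ℝ) with hg
  have hgi : Integrable g := ((hi₁.add hi₂).const_mul _).mul_const _
  have hg0 (α : ℝ) : 0 ≤ g α := by
    have := hnn (-h) α
    have := hnn (-2) (β - α)
    positivity
  calc _ ≤ ∫ α in (-β)..β, g α := by
        refine intervalIntegral.norm_integral_le_of_norm_le (by linarith)
          (Filter.Eventually.of_forall fun α hα => ?_) hgi.intervalIntegrable
        rw [Real.norm_of_nonneg]
        · exact mul_le_mul_of_nonneg_right (kernel_le hp hh1 hh2 hL hm hβ hα.2) hs
        · exact mul_nonneg (mul_nonneg (Real.rpow_nonneg (by linarith [hα.2]) _) (hnn _ _)) hs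
    _ ≤ ∫ α, g α := by
        rw [intervalIntegral.integral_of_le (by linarith)]
        exact setIntegral_le_integral hgi (Filter.Eventually.of_forall hg0)
    _ = _ := by
        rw [hg, MeasureTheory.integral_mul_const, MeasureTheory.integral_const_mul,
          MeasureTheory.integral_add hi₁ hi₂, MeasureTheory.integral_const_mul,
          MeasureTheory.integral_const_mul,
          integral_sub_left_eq_self (fun x => jap x ^ (-2 : ℝ)) volume β]

lemma intervalIntegrable_sub_rpow_neg_half (m : ℝ) :
    IntervalIntegrable (fun β : ℝ => (m - β) ^ (-(1 / 2) : ℝ)) volume (m - 1) m := by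
  have hint := (intervalIntegrable_rpow' (a := 1) (b := 0) (r := -(1 / 2)) (by norm_num)).comp_sub_left m
  simpa using hint

lemma integral_sub_rpow_neg_half (m : ℝ) :
    ∫ β in (m - 1)..m, (m - β) ^ (-(1 / 2) : ℝ) = 2 := by
  rw [intervalIntegral.integral_comp_sub_left (fun x : ℝ => x ^ (-(1 / 2) : ℝ)) m,
    integral_rpow (Or.inl (by norm_num))]
  norm_num

theorem interior_region_estimate_two (p h : ℝ) (hp : 3 < p) (hh1 : 1 < h) (hh2 : h < p - 1) :
    ∀ c : ℝ, 0 < c → ∃ L₀ : ℝ, 1 ≤ L₀ ∧ ∀ L : ℝ, L₀ ≤ L → ∀ m : ℝ, 1 ≤ m →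
      (∫ β in (m - 1)..m, ∫ α in (-β)..β,
        (L + β - α) ^ (1 - p) * jap α ^ (-h) * (m - β) ^ (-(1 / 2) : ℝ))
      ≤ c * jap m ^ (-h) := by
  intro c hc
  have hlim : Filter.Tendsto (fun L : ℝ => 4 ^ h * (L ^ (h + 1 - p) * (∫ α, jap α ^ (-h)) +
      L ^ (3 - p) * ∫ α, jap α ^ (-2 : ℝ)) * 2) Filter.atTop (nhds 0) := by
    have h₁ := tendsto_rpow_neg_atTop (y := p - 1 - h) (by linarith)
    have h₂ := tendsto_rpow_neg_atTop (y := p - 3) (by linarith)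
    rw [show -(p - 1 - h) = h + 1 - p by ring] at h₁
    rw [show -(p - 3) = 3 - p by ring] at h₂
    simpa using (((h₁.mul_const (∫ α, jap α ^ (-h))).add
      (h₂.mul_const (∫ α, jap α ^ (-2 : ℝ)))).const_mul ((4 : ℝ) ^ h)).mul_const 2
  obtain ⟨L₁, hL₁⟩ := Filter.eventually_atTop.1 (hlim.eventually_lt_const hc)
  refine ⟨max 1 L₁, le_max_left _ _, fun L hL m hm => ?_⟩
  have hsmall := hL₁ L ((le_max_right _ _).trans hL)
  have hL1 : 1 ≤ L := (le_max_left _ _).trans hL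
  have hjm := Real.rpow_pos_of_pos (jap_pos m) (-h)
  refine (le_abs_self _).trans ((intervalIntegral.norm_integral_le_of_norm_le (by linarith)
    (Filter.Eventually.of_forall fun β hβ =>
      norm_inner_integral_le hp hh1 hh2 hL1 hm hβ.1.le hβ.2)
    ((intervalIntegrable_sub_rpow_neg_half m).const_mul _)).trans ?_)
  rw [intervalIntegral.integral_const_mul, integral_sub_rpow_neg_half]
  refine le_trans (le_of_eq ?_) (mul_le_mul_of_nonneg_right hsmall.le hjm.le)
  ring
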